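/- Let K ⊆ ℝ² be a Minkowski centered convex body with s(K) > φ and write s = s(K). Then there exist a point p ∈ bd(K) ∩ bd(−K) and points p¹, p², p³ ∈ ℝ² such that the convex body K̄ := conv{p, −p, p², p³, −s·p¹, −s·p², −s·p³} is Minkowski centered, p¹, p², p³ form a well-spread triple of asymmetry points of K̄, the affine lines through {−p, p³} and through {p, p²} meet in a single point d¹ with p¹ = −γ·d¹ for some 0 < γ < 1, and moreover: (i) s(K̄) = s(K); (ii) τ(K̄) ≥ τ(K); (iii) p ∈ bd(K̄ ∩ (−K̄)) ∩ τ(K̄)·bd((K̄ − K̄)/2). -/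

import Mathlib

open scoped Pointwise RealInnerProductSpace
open Set

noncomputable section

abbrev E2 := EuclideanSpace ℝ (Fin 2)

/-- A convex body: compact convex set with nonempty interior. -/
def IsConvexBody (K : Set E2) : Prop :=
  Convex ℝ K ∧ IsCompact K ∧ (interior K).Nonempty

/-- circumradius `R(K,C)` -/
def circum (K C : Set E2) : ℝ :=
  sInf {ρ : ℝ | 0 < ρ ∧ ∃ t : E2, K ⊆ ρ • C + {t}}

/-- inradius `r(K,C)` -/
def inrad (K C : Set E2) : ℝ :=
  sSup {ρ : ℝ | 0 < ρ ∧ ∃ t : E2, ρ • C + {t} ⊆ K}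

/-- width `w(K,C)` -/
def widthB (K C : Set E2) : ℝ := 2 * inrad (K - K) (C - C)

/-- diameter `D(K,C)` -/
def diamB (K C : Set E2) : ℝ := 2 * circum (K - K) (C - C)

/-- Minkowski asymmetry `s(K)` -/
def minkAsym (K : Set E2) : ℝ :=
  sInf {ρ : ℝ | 0 < ρ ∧ ∃ c : E2, K - {c} ⊆ ρ • ({c} - K)}

/-- `K` is Minkowski centered -/
def MinkCentered (K : Set E2) : Prop := K ⊆ minkAsym K • (-K)

/-- `τ(K)`: smallest `ρ > 0` with `K ∩ (-K) ⊆ ρ • ((K-K)/2)` -/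
def tauB (K : Set E2) : ℝ :=
  sInf {ρ : ℝ | 0 < ρ ∧ K ∩ (-K) ⊆ ρ • ((2:ℝ)⁻¹ • (K - K))}

/-- golden ratio -/
def phiR : ℝ := (1 + Real.sqrt 5) / 2

def cExpr2 (s : ℝ) : ℝ :=
  (s^2+1)^2 / ((s^2-1) * (s^2+2*s-1+2*Real.sqrt (s*(s^2-1))))

def cExpr3 (s : ℝ) : ℝ := 2*(s^2-2*s-1) / ((s-3)*(s+1))

/-- `ŝ`: the unique `s ∈ (φ,2)` where the two expressions agree. -/
def sHat : ℝ := sInf {s : ℝ | phiR < s ∧ s < 2 ∧ cExpr2 s = cExpr3 s}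

def cFun (s : ℝ) : ℝ :=
  if s ≤ phiR then 1 else if s ≤ sHat then cExpr2 s else cExpr3 s

/-- polar body -/
def polarBody (K : Set E2) : Set E2 := {y | ∀ x ∈ K, (inner ℝ x y : ℝ) ≤ 1}

/-- `γ(K)` -/
def gammaB (K : Set E2) : ℝ :=
  sInf {ρ : ℝ | 0 < ρ ∧
    polarBody ((2:ℝ)⁻¹ • (polarBody K - polarBody K)) ⊆ ρ • convexHull ℝ (K ∪ -K)}

/-- positive hull of two points -/
def posHull2 (a b : E2) : Set E2 := {x | ∃ α β : ℝ, 0 ≤ α ∧ 0 ≤ β ∧ x = α • a + β • b}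

/-- asymmetry point of `K`: a point of `bd(K) ∩ bd(−(1/s(K))·K)` -/
def IsAsymPoint (K : Set E2) (p : E2) : Prop :=
  p ∈ frontier K ∧ p ∈ frontier ((-(minkAsym K)⁻¹) • K)

/-- a well-spread triple of asymmetry points -/
def WellSpread (K : Set E2) (p1 p2 p3 : E2) : Prop :=
  IsAsymPoint K p1 ∧ IsAsymPoint K p2 ∧ IsAsymPoint K p3 ∧
  ∃ a1 a2 a3 : E2, a1 ≠ 0 ∧ a2 ≠ 0 ∧ a3 ≠ 0 ∧
    (∀ x ∈ K, (inner ℝ a1 x : ℝ) ≤ inner ℝ a1 p1) ∧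
    (∀ x ∈ K, (inner ℝ a2 x : ℝ) ≤ inner ℝ a2 p2) ∧
    (∀ x ∈ K, (inner ℝ a3 x : ℝ) ≤ inner ℝ a3 p3) ∧
    (0:E2) ∈ interior (convexHull ℝ {p1, p2, p3}) ∧
    (0:E2) ∈ convexHull ℝ {a1, a2, a3}

/-- two points of `bd(K) ∩ bd(-K)` are consecutive -/
def Consecutive (K : Set E2) (z1 z2 : E2) : Prop :=
  ¬ ∃ z, z ∈ frontier K ∩ frontier (-K) ∧ z ∈ interior (posHull2 z1 z2)

/-- point of the plane from coordinates -/
def pt (x y : ℝ) : E2 := (WithLp.equiv 2 (Fin 2 → ℝ)).symm ![x, y]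

/-- the golden house -/
def goldenHouse : Set E2 :=
  convexHull ℝ {pt 1 0, pt (-1) 0, pt 1 (-1), pt (-1) (-1), pt 0 phiR}


lemma mem_hull3 {a b c x : E2} (hx : x ∈ convexHull ℝ ({a, b, c} : Set E2)) :
    ∃ u v w : ℝ, 0 ≤ u ∧ 0 ≤ v ∧ 0 ≤ w ∧ u + v + w = 1 ∧ u • a + v • b + w • c = x := by
  rw [convexHull_insert (by simp), convexHull_pair] at hx
  simp only [convexJoin_singleton_left, mem_iUnion] at hx
  obtain ⟨y, ⟨r, t, hr, ht, hrt, rfl⟩, ⟨u, v, hu, hv, huv, rfl⟩⟩ := hx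
  refine ⟨u, v * r, v * t, hu, by positivity, by positivity, ?_, ?_⟩
  · linear_combination huv + v * hrt
  · module

lemma hull3_mem {a b c : E2} {C : Set E2} (hC : Convex ℝ C) (ha : a ∈ C) (hb : b ∈ C) (hc : c ∈ C)
    {u v w : ℝ} (hu : 0 ≤ u) (hv : 0 ≤ v) (hw : 0 ≤ w) (h : u + v + w = 1) :
    u • a + v • b + w • c ∈ C := by
  have := hC.sum_mem (t := Finset.univ) (w := ![u, v, w]) (z := ![a, b, c])
    (by intro i _; fin_cases i <;> simpa) (by simp [Fin.sum_univ_three, h])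
    (by intro i _; fin_cases i <;> simpa)
  simpa [Fin.sum_univ_three] using this

lemma carath3 {A : Set E2} {x : E2} (hx : x ∈ convexHull ℝ A) :
    ∃ a ∈ A, ∃ b ∈ A, ∃ c ∈ A, x ∈ convexHull ℝ ({a, b, c} : Set E2) := by
  rw [convexHull_eq_union] at hx
  simp only [exists_prop, Set.mem_iUnion] at hx
  obtain ⟨t, ht₁, ht₂, ht₃⟩ := hx
  have hcard : t.card ≤ 3 := by
    have h := ht₂.card_le_finrank_succ
    have h2 := Submodule.finrank_le (vectorSpan ℝ (Set.range ((↑) : t → E2)))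
    simp at h h2
    omega
  have hne : t.Nonempty := by
    rw [← Finset.coe_nonempty, ← @convexHull_nonempty_iff ℝ]; exact ⟨x, ht₃⟩
  have hpos := hne.card_pos
  have : t.card = 1 ∨ t.card = 2 ∨ t.card = 3 := by omega
  rcases this with h | h | h
  · obtain ⟨a, rfl⟩ := Finset.card_eq_one.1 h
    have ha : a ∈ A := ht₁ (by simp)
    exact ⟨a, ha, a, ha, a, ha, by simpa using ht₃⟩
  · obtain ⟨a, b, -, rfl⟩ := Finset.card_eq_two.1 h
    have ha : a ∈ A := ht₁ (by simp)
    have hb : b ∈ A := ht₁ (by simp)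
    exact ⟨a, ha, b, hb, b, hb, by simpa using ht₃⟩
  · obtain ⟨a, b, c, -, -, -, rfl⟩ := Finset.card_eq_three.1 h
    have ha : a ∈ A := ht₁ (by simp)
    have hb : b ∈ A := ht₁ (by simp)
    have hc : c ∈ A := ht₁ (by simp)
    exact ⟨a, ha, b, hb, c, hc, by simpa using ht₃⟩

lemma compact_hull {A : Set E2} (hA : IsCompact A) : IsCompact (convexHull ℝ A) := by
  have hS : IsCompact (stdSimplex ℝ (Fin 3)) := isCompact_stdSimplex ℝ (Fin 3)
  have h := (hS.prod (hA.prod (hA.prod hA))).image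
    (f := fun z : (Fin 3 → ℝ) × E2 × E2 × E2 => z.1 0 • z.2.1 + z.1 1 • z.2.2.1 + z.1 2 • z.2.2.2)
    (by fun_prop)
  convert h using 1
  ext x
  constructor
  · intro hx
    obtain ⟨a, ha, b, hb, c, hc, hx⟩ := carath3 hx
    obtain ⟨u, v, w, hu, hv, hw, h1, rfl⟩ := mem_hull3 hx
    refine ⟨(![u, v, w], a, b, c), ⟨⟨?_, ?_⟩, ha, hb, hc⟩, by simp⟩
    · intro i; fin_cases i <;> simpa
    · simp [Fin.sum_univ_three, h1]
  · rintro ⟨⟨f, a, b, c⟩, ⟨⟨hf, hf1⟩, ha, hb, hc⟩, rfl⟩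
    rw [Fin.sum_univ_three] at hf1
    exact hull3_mem (convex_convexHull ℝ A) (subset_convexHull ℝ A ha) (subset_convexHull ℝ A hb)
      (subset_convexHull ℝ A hc) (hf 0) (hf 1) (hf 2) hf1

lemma exists_inner (f : E2 →L[ℝ] ℝ) : ∃ a : E2, ∀ x, f x = inner ℝ a x :=
  ⟨(InnerProductSpace.toDual ℝ E2).symm f, fun x => by simp⟩

/-- a point outside the interior of a convex body is weakly separated -/
lemma sep_int {K : Set E2} (hK : IsConvexBody K) {y : E2} (hy : y ∉ interior K) :
    ∃ a : E2, ‖a‖ = 1 ∧ ∀ x ∈ K, (inner ℝ a x : ℝ) ≤ inner ℝ a y := by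
  obtain ⟨hc, hk, hi⟩ := hK
  obtain ⟨f, hf⟩ := geometric_hahn_banach_open_point hc.interior isOpen_interior hy
  obtain ⟨a, ha⟩ := exists_inner f
  have ha0 : a ≠ 0 := by
    rintro rfl
    obtain ⟨z, hz⟩ := hi
    have := hf z hz
    simp [ha] at this
  have hle : ∀ x ∈ K, (inner ℝ a x : ℝ) ≤ inner ℝ a y := by
    have hcl : IsClosed {x : E2 | (inner ℝ a x : ℝ) ≤ inner ℝ a y} :=
      isClosed_le (by fun_prop) (by fun_prop)
    have hsub : interior K ⊆ {x : E2 | (inner ℝ a x : ℝ) ≤ inner ℝ a y} := by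
      intro x hx
      have := hf x hx
      rw [ha, ha] at this
      exact this.le
    have := closure_minimal hsub hcl
    rw [hc.closure_interior_eq_closure_of_nonempty_interior hi] at this
    exact fun x hx => this (subset_closure hx)
  have hn : 0 < ‖a‖ := norm_pos_iff.2 ha0
  refine ⟨‖a‖⁻¹ • a, ?_, ?_⟩
  · rw [norm_smul]; simp [hn.ne']
  · intro x hx
    rw [real_inner_smul_left, real_inner_smul_left]
    exact mul_le_mul_of_nonneg_left (hle x hx) (by positivity)

lemma centered_iff {K : Set E2} {s : ℝ} (hs : 0 < s) (h : K ⊆ s • (-K)) {q : E2} (hq : q ∈ K) :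
    (-s⁻¹) • q ∈ K := by
  obtain ⟨k, hk, rfl⟩ := h hq
  have : (-s⁻¹) • (s • k) = -k := by
    rw [smul_smul]; field_simp; simp
  simp only []
  rw [this]; exact hk

lemma touching {K : Set E2} (hK : IsConvexBody K) (hc : MinkCentered K) (hs : 0 < minkAsym K) :
    (0:E2) ∈ convexHull ℝ {a : E2 | ‖a‖ = 1 ∧ ∃ q ∈ K, ∀ x ∈ K,
      (inner ℝ a x : ℝ) ≤ inner ℝ a ((-(minkAsym K)⁻¹) • q)} := by
  set s := minkAsym K with hsdef
  obtain ⟨hcv, hk, hi⟩ := id hK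
  set A : Set E2 := {a : E2 | ‖a‖ = 1 ∧ ∃ q ∈ K, ∀ x ∈ K,
      (inner ℝ a x : ℝ) ≤ inner ℝ a ((-s⁻¹) • q)} with hA
  have hAc : IsCompact A := by
    have h1 : IsCompact ((Metric.sphere (0:E2) 1) ×ˢ K) := (isCompact_sphere 0 1).prod hk
    have h2 : IsClosed {z : E2 × E2 | ∀ x ∈ K, (inner ℝ z.1 x : ℝ) ≤ inner ℝ z.1 ((-s⁻¹) • z.2)} := by
      simp only [ofPred_forall]
      refine isClosed_biInter fun x _ => isClosed_le (by fun_prop) (by fun_prop)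
    convert (h1.inter_right h2).image continuous_fst using 1
    ext a
    constructor
    · rintro ⟨h, q, hq, hh⟩
      exact ⟨(a, q), ⟨⟨by simpa using h, hq⟩, hh⟩, rfl⟩
    · rintro ⟨⟨a, q⟩, ⟨⟨h, hq⟩, hh⟩, rfl⟩
      exact ⟨by simpa using h, q, hq, hh⟩
  by_contra h0
  obtain ⟨f, u, hf0, hf⟩ := geometric_hahn_banach_point_closed (convex_convexHull ℝ A)
    (compact_hull hAc).isClosed h0
  obtain ⟨v, hv⟩ := exists_inner f
  have hv' : ∀ a ∈ A, 0 < (inner ℝ a v : ℝ) := by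
    intro a ha
    have := hf a (subset_convexHull ℝ A ha)
    rw [hv, real_inner_comm] at this
    simp at hf0
    linarith
  -- first perturbation
  have step1 : ∃ ε : ℝ, 0 < ε ∧ ∀ a q : E2, ‖a‖ = 1 → q ∈ K → ∃ x ∈ K,
      (inner ℝ a ((-s⁻¹) • q - ε • v) : ℝ) < inner ℝ a x := by
    have h1 : IsCompact ((Metric.sphere (0:E2) 1) ×ˢ K) := (isCompact_sphere 0 1).prod hk
    have := h1.eventually_forall_of_forall_eventually (x₀ := (0:ℝ))
      (P := fun ε z => 0 < ε → z.2 ∈ K → ∃ x ∈ K,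
        (inner ℝ z.1 ((-s⁻¹) • z.2 - ε • v) : ℝ) < inner ℝ z.1 x) ?_
    · obtain ⟨ε, h, he⟩ := ((this.filter_mono nhdsWithin_le_nhds).and
        (self_mem_nhdsWithin (s := Set.Ioi (0:ℝ)))).exists
      exact ⟨ε, he, fun a q ha hq => h (a, q) ⟨by simpa using ha, hq⟩ he hq⟩
    · rintro ⟨a, q⟩ ⟨ha, hq⟩
      have ha : ‖a‖ = 1 := by simpa using ha
      by_cases hh : ∀ x ∈ K, (inner ℝ a x : ℝ) ≤ inner ℝ a ((-s⁻¹) • q)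
      · have h3 := hv' a ⟨ha, q, hq, hh⟩
        have : ∀ᶠ z : ℝ × E2 × E2 in nhds (0, a, q), 0 < (inner ℝ z.2.1 v : ℝ) := by
          have hcont : Continuous fun z : ℝ × E2 × E2 => (inner ℝ z.2.1 v : ℝ) := by fun_prop
          exact hcont.continuousAt.eventually (lt_mem_nhds (by simpa using h3))
        filter_upwards [this] with z hz hz1 hz2
        refine ⟨_, centered_iff hs hc hz2, ?_⟩
        rw [inner_sub_right, inner_smul_right _ v]
        have := mul_pos hz1 hz
        linarith
      · push Not at hh
        obtain ⟨x, hx, hlt⟩ := hh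
        have hcont : Continuous fun z : ℝ × E2 × E2 =>
          (inner ℝ z.2.1 x - inner ℝ z.2.1 ((-s⁻¹) • z.2.2 - z.1 • v) : ℝ) := by fun_prop
        have : ∀ᶠ z : ℝ × E2 × E2 in nhds (0, a, q),
            0 < (inner ℝ z.2.1 x - inner ℝ z.2.1 ((-s⁻¹) • z.2.2 - z.1 • v) : ℝ) :=
          hcont.continuousAt.eventually (lt_mem_nhds (by simpa [neg_lt_iff_pos_add] using hlt))
        filter_upwards [this] with z hz _ _
        exact ⟨x, hx, by linarith⟩
  obtain ⟨ε, he, hstep⟩ := step1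
  have hint : ∀ q ∈ K, (-s⁻¹) • q - ε • v ∈ interior K := by
    intro q hq
    by_contra hn
    obtain ⟨a, ha, hle⟩ := sep_int hK hn
    obtain ⟨x, hx, hlt⟩ := hstep a q ha hq
    exact absurd (hle x hx) (not_le.2 hlt)
  have hev := hk.eventually_forall_of_forall_eventually (x₀ := s)
      (P := fun ρ q => (-ρ⁻¹) • q - ε • v ∈ interior K) (by
    intro q hq
    have hcont : ContinuousAt (fun z : ℝ × E2 => (-z.1⁻¹) • z.2 - ε • v) (s, q) := by
      have h1 : ContinuousAt (fun z : ℝ × E2 => z.1⁻¹) (s, q) :=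
        ContinuousAt.inv₀ continuous_fst.continuousAt hs.ne'
      fun_prop
    exact hcont.eventually (isOpen_interior.mem_nhds (hint q hq)))
  obtain ⟨ρ, ⟨h, h0⟩, hlt⟩ := (((hev.and (lt_mem_nhds hs)).filter_mono nhdsWithin_le_nhds).and
        (self_mem_nhdsWithin (s := Set.Iio s))).exists
  have hlt : ρ < s := hlt
  have hmem : ρ ∈ {ρ : ℝ | 0 < ρ ∧ ∃ c : E2, K - {c} ⊆ ρ • ({c} - K)} := by
    refine ⟨h0, (-(ρ * ε / (1 + ρ))) • v, ?_⟩
    rintro _ ⟨q, hq, c, rfl, rfl⟩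
    have hkk := interior_subset (h q hq)
    refine ⟨_, ⟨_, rfl, _, hkk, rfl⟩, ?_⟩
    have : (1 + ρ) ≠ 0 := by positivity
    simp only []
    match_scalars <;> field_simp
    ring
  have hb : BddBelow {ρ : ℝ | 0 < ρ ∧ ∃ c : E2, K - {c} ⊆ ρ • ({c} - K)} :=
    ⟨0, fun x hx => hx.1.le⟩
  have := csInf_le hb hmem
  change s ≤ ρ at this
  linarith

lemma zero_int {K : Set E2} (hK : IsConvexBody K) {s : ℝ} (hs : 0 < s) (hc : K ⊆ s • (-K)) :
    (0:E2) ∈ interior K := by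
  obtain ⟨hcv, hk, ⟨z, hz⟩⟩ := hK
  have h := centered_iff hs hc (interior_subset hz)
  have := hcv.combo_interior_self_mem_interior hz h (a := 1/(1+s)) (b := s/(1+s)) (by positivity)
    (by positivity) (by field_simp)
  convert this using 1
  match_scalars
  field_simp
  ring

/-- optimal containment configuration -/
structure Cfg (K : Set E2) (s : ℝ) (p1 p2 p3 a1 a2 a3 : E2) (l1 l2 l3 : ℝ) : Prop where
  m1 : p1 ∈ K
  m2 : p2 ∈ K
  m3 : p3 ∈ K
  n1 : (-s) • p1 ∈ K
  n2 : (-s) • p2 ∈ K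
  n3 : (-s) • p3 ∈ K
  u1 : ∀ x ∈ K, (inner ℝ a1 x : ℝ) ≤ 1
  u2 : ∀ x ∈ K, (inner ℝ a2 x : ℝ) ≤ 1
  u3 : ∀ x ∈ K, (inner ℝ a3 x : ℝ) ≤ 1
  e1 : (inner ℝ a1 p1 : ℝ) = 1
  e2 : (inner ℝ a2 p2 : ℝ) = 1
  e3 : (inner ℝ a3 p3 : ℝ) = 1
  w1 : 0 ≤ l1
  w2 : 0 ≤ l2
  w3 : 0 ≤ l3
  sum : l1 + l2 + l3 = 1
  dep : ∀ x, l1 * inner ℝ a1 x + l2 * inner ℝ a2 x + l3 * inner ℝ a3 x = 0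

lemma Cfg.swap {K : Set E2} {s : ℝ} {p1 p2 p3 a1 a2 a3 : E2} {l1 l2 l3 : ℝ}
    (h : Cfg K s p1 p2 p3 a1 a2 a3 l1 l2 l3) : Cfg K s p1 p3 p2 a1 a3 a2 l1 l3 l2 :=
  ⟨h.m1, h.m3, h.m2, h.n1, h.n3, h.n2, h.u1, h.u3, h.u2, h.e1, h.e3, h.e2, h.w1, h.w3, h.w2,
    by linarith [h.sum], fun x => by linarith [h.dep x]⟩

lemma Cfg.rot {K : Set E2} {s : ℝ} {p1 p2 p3 a1 a2 a3 : E2} {l1 l2 l3 : ℝ}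
    (h : Cfg K s p1 p2 p3 a1 a2 a3 l1 l2 l3) : Cfg K s p2 p3 p1 a2 a3 a1 l2 l3 l1 :=
  ⟨h.m2, h.m3, h.m1, h.n2, h.n3, h.n1, h.u2, h.u3, h.u1, h.e2, h.e3, h.e1, h.w2, h.w3, h.w1,
    by linarith [h.sum], fun x => by linarith [h.dep x]⟩

lemma exists_cfg {K : Set E2} (hK : IsConvexBody K) (hc : MinkCentered K) (hs : 0 < minkAsym K) :
    ∃ p1 p2 p3 a1 a2 a3 l1 l2 l3, Cfg K (minkAsym K) p1 p2 p3 a1 a2 a3 l1 l2 l3 := by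
  obtain ⟨a, ha, b, hb, c, hc', hx⟩ := carath3 (touching hK hc hs)
  obtain ⟨u, v, w, hu, hv, hw, h1, h0⟩ := mem_hull3 hx
  set s := minkAsym K with hsdef
  have key : ∀ a ∈ {a : E2 | ‖a‖ = 1 ∧ ∃ q ∈ K, ∀ x ∈ K,
      (inner ℝ a x : ℝ) ≤ inner ℝ a ((-s⁻¹) • q)}, ∃ (h : ℝ) (p b : E2), 0 < h ∧ p ∈ K ∧ (-s) • p ∈ K ∧
        (∀ x ∈ K, (inner ℝ b x : ℝ) ≤ 1) ∧ (inner ℝ b p : ℝ) = 1 ∧ a = h • b := by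
    rintro a ⟨hn, q, hq, hle⟩
    have hp := centered_iff hs hc hq
    have hpos : 0 < (inner ℝ a ((-s⁻¹) • q) : ℝ) := by
      have hz := zero_int hK hs hc
      have hcont : Continuous fun t : ℝ => t • a := by fun_prop
      have hev : ∀ᶠ t : ℝ in nhds 0, t • a ∈ interior K :=
        hcont.continuousAt.eventually (isOpen_interior.mem_nhds (by simpa using hz))
      obtain ⟨t, ht, ht0⟩ := ((hev.filter_mono nhdsWithin_le_nhds).and
        (self_mem_nhdsWithin (s := Set.Ioi (0:ℝ)))).exists
      have := hle _ (interior_subset ht)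
      rw [inner_smul_right, real_inner_self_eq_norm_sq, hn] at this
      have ht0 : 0 < t := ht0
      linarith
    set h := (inner ℝ a ((-s⁻¹) • q) : ℝ) with hh
    refine ⟨h, (-s⁻¹) • q, h⁻¹ • a, hpos, hp, ?_, ?_, ?_, ?_⟩
    · convert hq using 1
      match_scalars; field_simp
    · intro x hx
      rw [real_inner_smul_left]
      have := hle x hx
      rw [inv_mul_le_iff₀ hpos]; linarith
    · rw [real_inner_smul_left, ← hh]; field_simp
    · rw [smul_smul]; field_simp; simp
  obtain ⟨h1', p1, a1, hh1, hp1, hq1, hu1, he1, rfl⟩ := key a ha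
  obtain ⟨h2', p2, a2, hh2, hp2, hq2, hu2, he2, rfl⟩ := key b hb
  obtain ⟨h3', p3, a3, hh3, hp3, hq3, hu3, he3, rfl⟩ := key c hc'
  have hW : 0 < u * h1' + v * h2' + w * h3' := by
    rcases hu.lt_or_eq with hu' | hu'
    · positivity
    rcases hv.lt_or_eq with hu' | hu'
    · positivity
    have : 0 < w := by linarith
    positivity
  set W := u * h1' + v * h2' + w * h3' with hWd
  refine ⟨p1, p2, p3, a1, a2, a3, u * h1' / W, v * h2' / W, w * h3' / W, hp1, hp2, hp3, hq1, hq2,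
    hq3, hu1, hu2, hu3, he1, he2, he3, by positivity, by positivity, by positivity, ?_, ?_⟩
  · field_simp; linarith
  · intro x
    have h : (inner ℝ (u • h1' • a1 + v • h2' • a2 + w • h3' • a3) x : ℝ) = 0 := by
      rw [h0]; simp
    simp only [inner_add_left, real_inner_smul_left] at h
    field_simp
    linarith

lemma Cfg.lle {K : Set E2} {s : ℝ} {p1 p2 p3 a1 a2 a3 : E2} {l1 l2 l3 : ℝ}
    (h : Cfg K s p1 p2 p3 a1 a2 a3 l1 l2 l3) : (s + 1) * l1 ≤ 1 := by
  have h1 := h.dep ((-s) • p1)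
  have h2 := h.u2 _ h.n1
  have h3 := h.u3 _ h.n1
  rw [inner_smul_right _ p1, h.e1] at h1
  nlinarith [h.w2, h.w3, h.sum]

lemma Cfg.sle {K : Set E2} {s : ℝ} {p1 p2 p3 a1 a2 a3 : E2} {l1 l2 l3 : ℝ}
    (h : Cfg K s p1 p2 p3 a1 a2 a3 l1 l2 l3) : s ≤ 2 := by
  have := h.lle
  have := h.rot.lle
  have := h.rot.rot.lle
  have := h.sum
  nlinarith

lemma Cfg.lower {K : Set E2} {s : ℝ} {p1 p2 p3 a1 a2 a3 : E2} {l1 l2 l3 : ℝ}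
    (h : Cfg K s p1 p2 p3 a1 a2 a3 l1 l2 l3) : -1 ≤ s * inner ℝ a2 p1 := by
  have h2 := h.u2 _ h.n1
  rw [inner_smul_right _ p1] at h2
  linarith

lemma Cfg.neg {K : Set E2} {s : ℝ} {p1 p2 p3 a1 a2 a3 : E2} {l1 l2 l3 : ℝ}
    (h : Cfg K s p1 p2 p3 a1 a2 a3 l1 l2 l3) (hs : 1 < s) (hs2 : s + 1 < s ^ 2) :
    (inner ℝ a2 p1 : ℝ) < 0 := by
  have h1 := h.dep p1
  rw [h.e1] at h1
  have k1 := h.lle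
  have k2 := h.rot.lle
  have k3 := h.rot.rot.lle
  have hsum := h.sum
  have h3 := h.swap.lower
  set x := (inner ℝ a2 p1 : ℝ)
  set y := (inner ℝ a3 p1 : ℝ)
  by_contra hx
  push Not at hx
  have hl1 : (s - 1) ≤ (s + 1) * l1 := by nlinarith
  have e1 : 0 ≤ l2 * x := mul_nonneg h.w2 hx
  have e2 : -l3 ≤ s * (l3 * y) := by nlinarith [h.w3]
  have e3 : s * l1 ≤ l3 := by nlinarith
  nlinarith

/-- the reduced parameter region -/
def R1 (s α β : ℝ) : Prop :=
  0 ≤ α ∧ α ≤ β ∧ β ≤ 1 ∧ s ≤ s * α + β ∧ s ^ 2 * (α + β - 1) ≤ (α + β) - (α - β) ^ 2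

lemma vtx_R1 {s : ℝ} (hs : 1 < s) (hs2 : s + 1 < s ^ 2) (hs3 : s ≤ 2) :
    R1 s (s * (s - 1) / (s + 1)) (s * (2 * s + 1 - s ^ 2) / (s + 1)) := by
  have h1 : 0 < s + 1 := by linarith
  refine ⟨?_, ?_, ?_, ?_, ?_⟩
  · have : 0 < s - 1 := by linarith
    positivity
  · exact div_le_div_of_nonneg_right (by nlinarith) h1.le
  · rw [div_le_one h1]; nlinarith
  · apply le_of_eq; field_simp; ring
  · apply le_of_eq; field_simp; ring

lemma vtx_val {s M : ℝ} (hs : 1 < s) (hs2 : s + 1 < s ^ 2) (hs3 : s ≤ 2)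
    (hM : ∀ α β, R1 s α β → 2 * β / (s + β - α) ≤ M) :
    2 * (2 * s + 1 - s ^ 2) / ((s + 1) * (3 - s)) ≤ M := by
  refine le_trans (le_of_eq ?_) (hM _ _ (vtx_R1 hs hs2 hs3))
  have h1 : 0 < s + 1 := by linarith
  have h2 : 0 < 3 - s := by linarith
  have : s + s * (2 * s + 1 - s ^ 2) / (s + 1) - s * (s - 1) / (s + 1) = s * (3 - s) := by
    field_simp; ring
  rw [this]
  field_simp

lemma base_val {s M : ℝ} (hs : 1 < s) (hs2 : s + 1 < s ^ 2) (hs3 : s ≤ 2)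
    (hM : ∀ α β, R1 s α β → 2 * β / (s + β - α) ≤ M) : 2 / (s + 1) ≤ M := by
  refine le_trans ?_ (vtx_val hs hs2 hs3 hM)
  have h1 : 0 < s + 1 := by linarith
  have h2 : 0 < 3 - s := by linarith
  rw [div_le_div_iff₀ h1 (by positivity)]
  nlinarith [mul_nonneg (mul_nonneg (by linarith : (0:ℝ) ≤ s - 1) (by linarith : (0:ℝ) ≤ 2 - s)) h1.le]

lemma num_core {s M α β b c m2 m3 : ℝ} (hs : 1 < s) (hs2 : s + 1 < s ^ 2) (hs3 : s ≤ 2)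
    (hM : ∀ α β, R1 s α β → 2 * β / (s + β - α) ≤ M) (hα : 0 ≤ α) (hαβ : α ≤ β)
    (hb : 0 < b) (hc : 0 < c) (hsc : s * c ≤ 1) (h1 : α * b + β ≤ 1) (h2 : α + β * c ≤ 1)
    (hm2 : 0 ≤ m2) (hm3 : 0 ≤ m3) (g2 : m2 - b * m3 ≤ 1) (g3 : m3 - c * m2 ≤ 1)
    (hm : s ^ 2 ≤ m2 + m3) (hcase : s ≤ s * β + α) : 2 * β / (s + β - α) ≤ M := by
  have hβ : 0 ≤ β := hα.trans hαβ
  have hβ1 : β ≤ 1 := by nlinarith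
  have hα1 : α ≤ 1 := by linarith
  have hsum : 1 ≤ α + β := by nlinarith
  have k2 : α * m2 - (1 - β) * m3 ≤ α := by nlinarith [mul_le_mul_of_nonneg_left g2 hα, mul_le_mul_of_nonneg_right h1 hm3]
  have k3 : β * m3 - (1 - α) * m2 ≤ β := by nlinarith [mul_le_mul_of_nonneg_left g3 hβ, mul_le_mul_of_nonneg_right h2 hm2]
  have k4 : s * m3 - m2 ≤ s := by nlinarith [mul_le_mul_of_nonneg_right hsc hm2]
  by_cases hR : s ≤ s * α + β
  · refine hM α β ⟨hα, hαβ, hβ1, hR, ?_⟩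
    have e1 := mul_le_mul_of_nonneg_left k2 (by linarith : 0 ≤ 1 + β - α)
    have e2 := mul_le_mul_of_nonneg_left k3 (by linarith : 0 ≤ 1 + α - β)
    have e3 := mul_le_mul_of_nonneg_left hm (by linarith : 0 ≤ α + β - 1)
    nlinarith
  · push Not at hR
    refine le_trans ?_ (vtx_val hs hs2 hs3 hM)
    have q1 : 0 < s + 1 := by linarith
    have q2 : 0 < 3 - s := by linarith
    have e1 := mul_le_mul_of_nonneg_left k4 (by linarith : 0 ≤ 1 + α - β)
    have e2 := mul_le_mul_of_nonneg_left k2 q1.le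
    have e3 := mul_le_mul_of_nonneg_left hm (by nlinarith : 0 ≤ s * α + β - 1)
    have key : (s + 1) * (s * β + (s ^ 2 - s - 1) * α) ≤ (s + 1) * s := by nlinarith
    have key := le_of_mul_le_mul_left key q1
    have f1 := mul_le_mul_of_nonneg_left key (by linarith : 0 ≤ s - 1)
    have f2 := mul_le_mul_of_nonneg_left hR.le (by nlinarith : 0 ≤ 2 + s - s ^ 2)
    rw [div_le_div_iff₀ (by linarith) (by positivity)]
    nlinarith

lemma scale_mem {K : Set E2} (hK : Convex ℝ K) (h0 : (0:E2) ∈ K) {x y p : E2} (hx : x ∈ K) (hy : y ∈ K)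
    {ρ M : ℝ} (hρ : 0 ≤ ρ) (hM : 0 < M) (hρM : ρ ≤ M) (hp : p = (ρ / 2) • (x - y)) :
    ∃ x ∈ K, ∃ y ∈ K, p = (M / 2) • (x - y) := by
  have h1 : ρ / M ∈ Set.Icc (0:ℝ) 1 := ⟨by positivity, by rw [div_le_one hM]; exact hρM⟩
  refine ⟨(ρ / M) • x, hK.smul_mem_of_zero_mem h0 hx h1, (ρ / M) • y,
    hK.smul_mem_of_zero_mem h0 hy h1, ?_⟩
  rw [hp]
  match_scalars <;> field_simp

/-- solving in the basis `p2, p3` -/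
lemma Cfg.basis {K : Set E2} {s : ℝ} {p1 p2 p3 a1 a2 a3 : E2} {l1 l2 l3 : ℝ}
    (h : Cfg K s p1 p2 p3 a1 a2 a3 l1 l2 l3) (hs : 1 < s) (hs2 : s + 1 < s ^ 2) (p : E2) :
    ∃ X Y : ℝ, p = X • p2 + Y • p3 := by
  have hli : LinearIndependent ℝ ![p2, p3] := by
    rw [LinearIndependent.pair_iff]
    intro u v huv
    have h2 : (inner ℝ a2 (u • p2 + v • p3) : ℝ) = 0 := by rw [huv]; simp
    have h3 : (inner ℝ a3 (u • p2 + v • p3) : ℝ) = 0 := by rw [huv]; simp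
    rw [inner_add_right, inner_smul_right, inner_smul_right, h.e2] at h2
    rw [inner_add_right, inner_smul_right, inner_smul_right, h.e3] at h3
    have b1 := h.rot.neg hs hs2
    have b2 := h.rot.lower
    have c1 := h.swap.rot.neg hs hs2
    have c2 := h.swap.rot.lower
    set b := (inner ℝ a3 p2 : ℝ)
    set c := (inner ℝ a2 p3 : ℝ)
    have hb : -1 < b := by nlinarith
    have hc : -1 < c := by nlinarith
    have hd : 0 < 1 - b * c := by nlinarith
    have : v * (1 - b * c) = 0 := by linear_combination h3 - b * h2
    have hv : v = 0 := by
      rcases mul_eq_zero.1 this with h | h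
      · exact h
      · linarith
    subst hv
    simp at h2
    exact ⟨h2, rfl⟩
  have htop := hli.span_eq_top_of_card_eq_finrank (by simp)
  have : p ∈ Submodule.span ℝ (Set.range ![p2, p3]) := by rw [htop]; trivial
  simp only [Matrix.range_cons, Matrix.range_empty, Set.union_empty, Set.singleton_union] at this
  obtain ⟨X, Y, h⟩ := Submodule.mem_span_pair.1 this
  exact ⟨X, Y, h.symm⟩

lemma Cfg.opp {K : Set E2} {s : ℝ} {p1 p2 p3 a1 a2 a3 : E2} {l1 l2 l3 : ℝ}
    (h : Cfg K s p1 p2 p3 a1 a2 a3 l1 l2 l3) (hs : 1 < s) (hs2 : s + 1 < s ^ 2) :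
    ∃ X Y : ℝ, 0 < X ∧ 0 < Y ∧ (-s) • p1 = X • p2 + Y • p3 ∧ s ^ 2 ≤ X + Y := by
  obtain ⟨X, Y, hXY⟩ := h.basis hs hs2 ((-s) • p1)
  have h1 := congrArg (fun x => (inner ℝ a1 x : ℝ)) hXY
  have h2 := congrArg (fun x => (inner ℝ a2 x : ℝ)) hXY
  have h3 := congrArg (fun x => (inner ℝ a3 x : ℝ)) hXY
  simp only [inner_add_right, inner_smul_right, h.e1, h.e2, h.e3] at h1 h2 h3
  have n1 := h.neg hs hs2
  have n2 := h.swap.neg hs hs2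
  have b1 := h.rot.neg hs hs2
  have b2 := h.rot.lower
  have c1 := h.swap.rot.neg hs hs2
  have c2 := h.swap.rot.lower
  have d1 := h.rot.swap.lower
  have d2 := h.rot.rot.lower
  set b := (inner ℝ a3 p2 : ℝ)
  set c := (inner ℝ a2 p3 : ℝ)
  have hb : -1 < b := by nlinarith
  have hc : -1 < c := by nlinarith
  have hd : 0 < 1 - b * c := by nlinarith
  have hX : 0 < X := by
    have : 0 < X * (1 - b * c) := by
      have : X * (1 - b * c) = (-s * inner ℝ a2 p1) + (-c) * (-s * inner ℝ a3 p1) := by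
        rw [h2, h3]; ring
      rw [this]
      have e1 : 0 < -s * inner ℝ a2 p1 := by nlinarith
      have e2 : 0 < -s * inner ℝ a3 p1 := by nlinarith
      have e3 : 0 < -c := by linarith
      positivity
    exact pos_of_mul_pos_left this hd.le
  have hY : 0 < Y := by
    have : 0 < Y * (1 - b * c) := by
      have : Y * (1 - b * c) = (-s * inner ℝ a3 p1) + (-b) * (-s * inner ℝ a2 p1) := by
        rw [h2, h3]; ring
      rw [this]
      have e1 : 0 < -s * inner ℝ a2 p1 := by nlinarith
      have e2 : 0 < -s * inner ℝ a3 p1 := by nlinarith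
      have e3 : 0 < -b := by linarith
      positivity
    exact pos_of_mul_pos_left this hd.le
  refine ⟨X, Y, hX, hY, hXY, ?_⟩
  have e1 := mul_le_mul_of_nonneg_left d1 hX.le
  have e2 := mul_le_mul_of_nonneg_left d2 hY.le
  nlinarith

lemma Cfg.core {K : Set E2} {s : ℝ} {p1 p2 p3 a1 a2 a3 : E2} {l1 l2 l3 : ℝ}
    (h : Cfg K s p1 p2 p3 a1 a2 a3 l1 l2 l3) (hs : 1 < s) (hs2 : s + 1 < s ^ 2) {M : ℝ}
    (hM : ∀ α β, R1 s α β → 2 * β / (s + β - α) ≤ M) (hK : Convex ℝ K) (h0 : (0:E2) ∈ K)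
    {p : E2} (hp : p ∈ K) (hnp : -p ∈ K) {α β : ℝ} (hα : 0 ≤ α) (hαβ : α ≤ β)
    (he : p = β • p2 - α • p3) : ∃ x ∈ K, ∃ y ∈ K, p = (M / 2) • (x - y) := by
  have hs3 := h.sle
  have hMb := base_val hs hs2 hs3 hM
  have hMpos : 0 < M := lt_of_lt_of_le (by positivity) hMb
  by_cases hcase : s * β + α ≤ s
  · -- p (s+1) = (β-α) (p2 + s p2) + (α (s+1)/s) (s (p2 - p3))
    have hβ : 0 ≤ β := hα.trans hαβ
    have hz : 0 ≤ 1 - ((β - α) + α * (s + 1) / s) := by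
      rw [sub_nonneg]
      have : (β - α) + α * (s + 1) / s = (s * β + α) / s := by field_simp; ring
      rw [this, div_le_one (by linarith)]; exact hcase
    have hx := hull3_mem hK h.m2 h.n3 h0 (u := β - α) (v := α * (s + 1) / s) (by linarith)
      (by positivity) hz (by ring)
    have hy := hull3_mem hK h.n2 h.n2 h0 (u := β - α) (v := α * (s + 1) / s) (by linarith)
      (by positivity) hz (by ring)
    refine scale_mem hK h0 hx hy (ρ := 2 / (s + 1)) (by positivity) hMpos hMb ?_
    rw [he]
    match_scalars <;> field_simp <;> ring
  · push Not at hcase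
    have hβ : 0 < β := by
      by_contra hn
      have hb0 : β ≤ 0 := by linarith
      nlinarith
    obtain ⟨X, Y, hX, hY, hXY, hsum⟩ := h.opp hs hs2
    have b1 := h.rot.neg hs hs2
    have b2 := h.rot.lower
    have c1 := h.swap.rot.neg hs hs2
    have g1 := h.u2 _ hp
    have g2 := h.u3 _ hnp
    have f1 := h.u2 _ h.n1
    have f2 := h.u3 _ h.n1
    rw [hXY] at f1 f2
    rw [he] at g1 g2
    simp only [inner_add_right, inner_sub_right, inner_neg_right, inner_smul_right, h.e1, h.e2, h.e3] at f1 f2 g1 g2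
    have hG := num_core (b := -inner ℝ a2 p3) (c := -inner ℝ a3 p2) hs hs2 hs3 hM hα hαβ
      (by linarith) (by linarith) (by linarith) (by linarith) (by linarith) hX.le hY.le
      (by linarith) (by linarith) hsum hcase.le
    have hpos : 0 < s + β - α := by linarith
    have hx := hull3_mem hK hp h.n3 h0 (u := (β - α) / β) (v := α / β) (w := 0)
      (div_nonneg (by linarith) hβ.le) (by positivity) le_rfl (by field_simp; ring)
    refine scale_mem hK h0 hx h.n2 (ρ := 2 * β / (s + β - α)) (by positivity) hMpos hG ?_
    rw [he]
    match_scalars <;> field_simp <;> ring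

lemma Cfg.main {K : Set E2} {s : ℝ} {p1 p2 p3 a1 a2 a3 : E2} {l1 l2 l3 : ℝ}
    (h : Cfg K s p1 p2 p3 a1 a2 a3 l1 l2 l3) (hs : 1 < s) (hs2 : s + 1 < s ^ 2) {M : ℝ}
    (hM : ∀ α β, R1 s α β → 2 * β / (s + β - α) ≤ M) (hK : Convex ℝ K) (h0 : (0:E2) ∈ K)
    {p : E2} (hp : p ∈ K) (hnp : -p ∈ K) : ∃ x ∈ K, ∃ y ∈ K, p = (M / 2) • (x - y) := by
  have key : ∀ {p1 p2 p3 a1 a2 a3 : E2} {l1 l2 l3 : ℝ} (_ : Cfg K s p1 p2 p3 a1 a2 a3 l1 l2 l3)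
      {α β : ℝ}, 0 ≤ α → 0 ≤ β → p = β • p2 - α • p3 →
      ∃ x ∈ K, ∃ y ∈ K, p = (M / 2) • (x - y) := by
    intro p1 p2 p3 a1 a2 a3 l1 l2 l3 h α β hα hβ he
    rcases le_total α β with hab | hab
    · exact h.core hs hs2 hM hK h0 hp hnp hα hab he
    · obtain ⟨x, hx, y, hy, hh⟩ := h.swap.core hs hs2 hM hK h0 (p := -p) hnp (by simpa using hp) hβ hab
        (by rw [he]; module)
      exact ⟨y, hy, x, hx, by rw [← neg_neg p, hh]; module⟩
  obtain ⟨m, n, hm, hn, hmn, -⟩ := h.opp hs hs2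
  obtain ⟨X, Y, he⟩ := h.basis hs hs2 p
  have hspos : 0 < s := by linarith
  -- p1 = -(m p2 + n p3)/s
  have hp1 : p1 = -((m / s) • p2 + (n / s) • p3) := by
    have : p1 = (-s⁻¹) • ((-s) • p1) := by match_scalars; field_simp
    rw [this, hmn]; module
  have e2 : p2 = -((s / m) • p1 + (n / m) • p3) := by
    rw [hp1]; match_scalars <;> field_simp; ring
  have e3 : p3 = -((s / n) • p1 + (m / n) • p2) := by
    rw [hp1]; match_scalars <;> field_simp; ring
  rcases le_total 0 X with hX | hX <;> rcases le_total 0 Y with hY | hY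
  · -- both nonneg
    rcases le_total (X * n) (Y * m) with hc | hc
    · -- X/m ≤ Y/n
      refine key h.rot (α := X * s / m) (β := Y - X * n / m) (by positivity) ?_ ?_
      · rw [sub_nonneg, div_le_iff₀ hm]; exact hc
      · rw [he, hp1]; match_scalars <;> field_simp; ring
    · refine key h.swap.rot (α := Y * s / n) (β := X - Y * m / n) (by positivity) ?_ ?_
      · rw [sub_nonneg, div_le_iff₀ hn]; exact hc
      · rw [he, hp1]; match_scalars <;> field_simp; ring
  · exact key h (α := -Y) (β := X) (by linarith) hX (by rw [he]; module)
  · exact key h.swap (α := -X) (β := Y) (by linarith) hY (by rw [he]; module)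
  · rcases le_total (X * n) (Y * m) with hc | hc
    · refine key h.swap.rot.swap (α := Y * m / n - X) (β := -Y * s / n) ?_ ?_ ?_
      · rw [sub_nonneg, le_div_iff₀ hn]; exact hc
      · have : 0 ≤ -Y := by linarith
        positivity
      · rw [he, hp1]; match_scalars <;> field_simp; ring
    · refine key h.rot.swap (α := X * n / m - Y) (β := -X * s / m) ?_ ?_ ?_
      · rw [sub_nonneg, le_div_iff₀ hm]; exact hc
      · have : 0 ≤ -X := by linarith
        positivity
      · rw [he, hp1]; match_scalars <;> field_simp; ring

lemma R1_max {s : ℝ} (hs : 1 < s) (hs2 : s + 1 < s ^ 2) (hs3 : s ≤ 2) :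
    ∃ α β, R1 s α β ∧ ∀ α' β', R1 s α' β' → 2 * β' / (s + β' - α') ≤ 2 * β / (s + β - α) := by
  have hcl : IsClosed {z : ℝ × ℝ | R1 s z.1 z.2} := by
    have e : {z : ℝ × ℝ | R1 s z.1 z.2} = {z | 0 ≤ z.1} ∩ ({z | z.1 ≤ z.2} ∩ ({z | z.2 ≤ 1} ∩
        ({z | s ≤ s * z.1 + z.2} ∩
        {z | s ^ 2 * (z.1 + z.2 - 1) ≤ (z.1 + z.2) - (z.1 - z.2) ^ 2}))) := rfl
    rw [e]
    refine IsClosed.inter ?_ (IsClosed.inter ?_ (IsClosed.inter ?_ (IsClosed.inter ?_ ?_)))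
    all_goals exact isClosed_le (by fun_prop) (by fun_prop)
  have hcpt : IsCompact {z : ℝ × ℝ | R1 s z.1 z.2} := by
    refine IsCompact.of_isClosed_subset (isCompact_Icc.prod isCompact_Icc) hcl
      (s := Set.Icc (0:ℝ) 1 ×ˢ Set.Icc (0:ℝ) 1) ?_
    rintro ⟨x, y⟩ ⟨h1, h2, h3, -, -⟩
    exact ⟨⟨h1, h2.trans h3⟩, ⟨h1.trans h2, h3⟩⟩
  obtain ⟨⟨α, β⟩, h, hmax⟩ := hcpt.exists_isMaxOn (f := fun z : ℝ × ℝ => 2 * z.2 / (s + z.2 - z.1))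
    ⟨(_, _), vtx_R1 hs hs2 hs3⟩ (by
      refine ContinuousOn.div (by fun_prop) (by fun_prop) ?_
      rintro ⟨x, y⟩ ⟨h1, h2, h3, -, -⟩
      simp only at *
      linarith)
  exact ⟨α, β, h, fun a b hab => hmax (a := (a, b)) hab⟩

lemma tau_mem {K : Set E2} (hK : IsConvexBody K) (hc : MinkCentered K) (hs : 1 < minkAsym K)
    (hs2 : minkAsym K + 1 < minkAsym K ^ 2) {M : ℝ} (hM0 : 0 < M)
    (hM : ∀ α β, R1 (minkAsym K) α β → 2 * β / (minkAsym K + β - α) ≤ M) :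
    0 < M ∧ K ∩ (-K) ⊆ M • ((2:ℝ)⁻¹ • (K - K)) := by
  obtain ⟨p1, p2, p3, a1, a2, a3, l1, l2, l3, h⟩ := exists_cfg hK hc (by linarith)
  have h0 := interior_subset (zero_int hK (by linarith) hc)
  refine ⟨hM0, ?_⟩
  rintro p ⟨hp, hnp⟩
  obtain ⟨x, hx, y, hy, rfl⟩ := h.main hs hs2 hM hK.1 h0 hp hnp
  exact ⟨_, ⟨_, ⟨x, hx, y, hy, rfl⟩, rfl⟩, by simp only []; module⟩

lemma tau_bdd (K : Set E2) : BddBelow {ρ : ℝ | 0 < ρ ∧ K ∩ (-K) ⊆ ρ • ((2:ℝ)⁻¹ • (K - K))} :=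
  ⟨0, fun _ hx => hx.1.le⟩

lemma frontier_of_max {C : Set E2} {a x : E2} (ha : a ≠ 0) (hx : x ∈ C)
    (h : ∀ y ∈ C, (inner ℝ a y : ℝ) ≤ inner ℝ a x) : x ∈ frontier C := by
  refine ⟨subset_closure hx, fun hi => ?_⟩
  have hcont : Continuous fun t : ℝ => x + t • a := by fun_prop
  have hev : ∀ᶠ t : ℝ in nhds 0, x + t • a ∈ interior C :=
    hcont.continuousAt.eventually (isOpen_interior.mem_nhds (by simpa using hi))
  obtain ⟨t, ht, ht0⟩ := ((hev.filter_mono nhdsWithin_le_nhds).and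
    (self_mem_nhdsWithin (s := Set.Ioi (0:ℝ)))).exists
  have := h _ (interior_subset ht)
  rw [inner_add_right, inner_smul_right, real_inner_self_eq_norm_sq] at this
  have ht0 : 0 < t := ht0
  have : 0 < t * ‖a‖ ^ 2 := by have := norm_pos_iff.2 ha; positivity
  linarith

lemma asym_eq {C : Set E2} {s : ℝ} (hs : 0 < s) (hC : C ⊆ s • (-C)) {p1 p2 p3 a1 a2 a3 : E2}
    (n1 : (-s) • p1 ∈ C) (n2 : (-s) • p2 ∈ C) (n3 : (-s) • p3 ∈ C)
    (u1 : ∀ x ∈ C, (inner ℝ a1 x : ℝ) ≤ inner ℝ a1 p1)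
    (u2 : ∀ x ∈ C, (inner ℝ a2 x : ℝ) ≤ inner ℝ a2 p2)
    (u3 : ∀ x ∈ C, (inner ℝ a3 x : ℝ) ≤ inner ℝ a3 p3)
    (h1 : 0 < (inner ℝ a1 p1 : ℝ)) (h2 : 0 < (inner ℝ a2 p2 : ℝ)) (h3 : 0 < (inner ℝ a3 p3 : ℝ))
    {l1 l2 l3 : ℝ} (w1 : 0 < l1) (w2 : 0 < l2) (w3 : 0 < l3)
    (dep : l1 • a1 + l2 • a2 + l3 • a3 = 0) : minkAsym C = s := by
  have hmem : s ∈ {ρ : ℝ | 0 < ρ ∧ ∃ c : E2, C - {c} ⊆ ρ • ({c} - C)} :=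
    ⟨hs, 0, by simpa using hC⟩
  apply le_antisymm
  · exact csInf_le ⟨0, fun x hx => hx.1.le⟩ hmem
  · refine le_csInf ⟨s, hmem⟩ ?_
    rintro ρ ⟨hρ, c, hsub⟩
    have key : ∀ a p : E2, (-s) • p ∈ C → (∀ x ∈ C, (inner ℝ a x : ℝ) ≤ inner ℝ a p) →
        (1 + ρ) * inner ℝ a c ≤ (ρ - s) * inner ℝ a p := by
      intro a p hp hu
      obtain ⟨_, ⟨_, rfl, y, hy, rfl⟩, he⟩ := hsub ⟨_, hp, c, rfl, rfl⟩
      have h := congrArg (fun x => (inner ℝ a x : ℝ)) he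
      simp only [inner_sub_right, inner_smul_right] at h
      have := mul_le_mul_of_nonneg_left (hu y hy) hρ.le
      linarith
    have k1 := mul_le_mul_of_nonneg_left (key a1 p1 n1 u1) w1.le
    have k2 := mul_le_mul_of_nonneg_left (key a2 p2 n2 u2) w2.le
    have k3 := mul_le_mul_of_nonneg_left (key a3 p3 n3 u3) w3.le
    have hd : l1 * inner ℝ a1 c + l2 * inner ℝ a2 c + l3 * inner ℝ a3 c = 0 := by
      have : (inner ℝ (l1 • a1 + l2 • a2 + l3 • a3) c : ℝ) = 0 := by rw [dep]; simp
      simpa only [inner_add_left, real_inner_smul_left] using this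
    have hpos : 0 < l1 * inner ℝ a1 p1 + l2 * inner ℝ a2 p2 + l3 * inner ℝ a3 p3 := by positivity
    have : 0 ≤ (ρ - s) * (l1 * inner ℝ a1 p1 + l2 * inner ℝ a2 p2 + l3 * inner ℝ a3 p3) := by
      have : (1 + ρ) * (l1 * inner ℝ a1 c + l2 * inner ℝ a2 c + l3 * inner ℝ a3 c) = 0 := by
        rw [hd]; ring
      linarith
    have := nonneg_of_mul_nonneg_left this hpos
    linarith

lemma dual_basis {p : E2} (hp : p ≠ 0) {α : ℝ} (β : ℝ) (hα : α ≠ 0) : ∃ p2 p3 e2 e3 : E2,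
    p = β • p2 - α • p3 ∧ (inner ℝ e2 p2 : ℝ) = 1 ∧ (inner ℝ e2 p3 : ℝ) = 0 ∧
    (inner ℝ e3 p2 : ℝ) = 0 ∧ (inner ℝ e3 p3 : ℝ) = 1 ∧
    ∀ x : E2, x = (inner ℝ e2 x : ℝ) • p2 + (inner ℝ e3 x : ℝ) • p3 := by
  have hN : p 0 ^ 2 + p 1 ^ 2 ≠ 0 := by
    intro h
    apply hp
    have h0 : p 0 = 0 := by nlinarith [sq_nonneg (p 0), sq_nonneg (p 1)]
    have h1 : p 1 = 0 := by nlinarith [sq_nonneg (p 0), sq_nonneg (p 1)]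
    ext i; fin_cases i
    · exact h0
    · exact h1
  set x := p 0 with hx
  set y := p 1 with hy
  set N := x ^ 2 + y ^ 2 with hNd
  refine ⟨!₂[-y, x], !₂[(-β * y - x) / α, (β * x - y) / α],
    !₂[(β * x - y) / N, (β * y + x) / N], !₂[-α * x / N, -α * y / N], ?_, ?_, ?_, ?_, ?_, ?_⟩
  · ext i; fin_cases i
    · simp [← hx]; field_simp; ring
    · simp [← hy]; field_simp; ring
  · simp [PiLp.inner_apply, Fin.sum_univ_two]; field_simp; rw [hNd]; ring
  · simp [PiLp.inner_apply, Fin.sum_univ_two]; field_simp; ring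
  · simp [PiLp.inner_apply, Fin.sum_univ_two]; field_simp; ring
  · simp [PiLp.inner_apply, Fin.sum_univ_two]; field_simp; rw [hNd]; ring
  · intro z
    ext i; fin_cases i
    · simp [PiLp.inner_apply, Fin.sum_univ_two]; field_simp; rw [hNd]; ring
    · simp [PiLp.inner_apply, Fin.sum_univ_two]; field_simp; rw [hNd]; ring

lemma exists_common {K : Set E2} (hK : IsConvexBody K) (h0 : (0:E2) ∈ interior K) :
    ∃ p, p ≠ 0 ∧ p ∈ frontier K ∩ frontier (-K) := by
  obtain ⟨hcv, hk, -⟩ := hK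
  have hn : K ∈ nhds (0:E2) := mem_interior_iff_mem_nhds.1 h0
  have hcont := continuous_gauge hcv hn
  have hconn : IsPreconnected ({0}ᶜ : Set E2) :=
    (isConnected_compl_singleton_of_one_lt_rank (by
      rw [← Module.finrank_eq_rank]; simp) 0).isPreconnected
  obtain ⟨v, hv⟩ : ∃ v : E2, v ≠ 0 := exists_ne 0
  set f : E2 → ℝ := fun x => gauge K x - gauge K (-x) with hf
  have hfc : Continuous f := by
    have : Continuous fun x => gauge K (-x) := hcont.comp continuous_neg
    exact hcont.sub this
  have hodd : f (-v) = - f v := by simp [hf]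
  have hz : ∃ x : E2, x ≠ 0 ∧ f x = 0 := by
    rcases le_total (f v) 0 with h | h
    · obtain ⟨x, hx, hx0⟩ := hconn.intermediate_value (a := v) (b := -v) hv (by simpa using hv)
        hfc.continuousOn (⟨h, by rw [hodd]; linarith⟩ : (0:ℝ) ∈ Set.Icc _ _)
      exact ⟨x, hx, hx0⟩
    · obtain ⟨x, hx, hx0⟩ := hconn.intermediate_value (a := -v) (b := v) (by simpa using hv) hv
        hfc.continuousOn (⟨by rw [hodd]; linarith, h⟩ : (0:ℝ) ∈ Set.Icc _ _)
      exact ⟨x, hx, hx0⟩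
  obtain ⟨x, hx, hx0⟩ := hz
  have hg : 0 < gauge K x := (gauge_pos (absorbent_nhds_zero hn)
    (NormedSpace.isVonNBounded_iff ℝ |>.2 hk.isBounded)).2 hx
  have hg1 : gauge K ((gauge K x)⁻¹ • x) = 1 := by
    rw [gauge_smul_of_nonneg (by positivity)]; simp [hg.ne']
  have hg2 : gauge K (-((gauge K x)⁻¹ • x)) = 1 := by
    rw [← smul_neg, gauge_smul_of_nonneg (by positivity)]
    have : gauge K (-x) = gauge K x := by simp only [hf] at hx0; linarith
    rw [this]; simp [hg.ne']
  refine ⟨(gauge K x)⁻¹ • x, smul_ne_zero (by positivity) hx,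
    (gauge_eq_one_iff_mem_frontier hcv hn).1 hg1, ?_⟩
  refine (gauge_eq_one_iff_mem_frontier hcv.neg (by
    have := neg_mem_nhds_zero E2 hn; exact this)).1 ?_
  rw [gauge_neg_set_eq_gauge_neg]; exact hg2

lemma nums {s α β : ℝ} (hs : 1 < s) (hs2 : s + 1 < s ^ 2) (hs3 : s ≤ 2) (h : R1 s α β) :
    0 < α ∧ 0 < β ∧ 1 < α + β ∧ α + β ≤ s ∧ s ≤ α + s * β ∧ ∃ m2 m3 γ : ℝ, 0 < m2 ∧ 0 < m3 ∧
      m2 + m3 = s ^ 2 ∧ α * m2 - (1 - β) * m3 ≤ α ∧ β * m3 - (1 - α) * m2 ≤ β ∧ m2 ≤ s ∧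
      0 < γ ∧ γ < 1 ∧ m2 * (α + β - 1) = s * γ * (β * (1 + α - β)) ∧
      m3 * (α + β - 1) = s * γ * (α * (1 + β - α)) := by
  obtain ⟨h1, h2, h3, h4, h5⟩ := h
  have hα : 0 < α := by nlinarith
  have hβ : 0 < β := by linarith
  have h6 : s ≤ α + s * β := by nlinarith
  have hS : 1 < α + β := by nlinarith
  have hSs : α + β ≤ s := by nlinarith [sq_nonneg (α - β)]
  have hW : 0 < (α + β) - (α - β) ^ 2 := by
    have : 0 < s ^ 2 * (α + β - 1) := by
      have : 0 < α + β - 1 := by linarith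
      positivity
    linarith
  refine ⟨hα, hβ, hS, hSs, h6, ?_⟩
  obtain ⟨W, hWd⟩ : ∃ W, W = (α + β) - (α - β) ^ 2 := ⟨_, rfl⟩
  rw [← hWd] at h5 hW
  have hA : 0 < 1 + α - β := by linarith
  have hB : 0 < 1 + β - α := by linarith
  have hS' : 0 < α + β - 1 := by linarith
  refine ⟨s ^ 2 * (β * (1 + α - β)) / W, s ^ 2 * (α * (1 + β - α)) / W, s * (α + β - 1) / W,
    by positivity, by positivity, ?_, ?_, ?_, ?_, by positivity, ?_, ?_, ?_⟩
  · field_simp; rw [hWd]; ring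
  · have : α * (s ^ 2 * (β * (1 + α - β)) / W) - (1 - β) * (s ^ 2 * (α * (1 + β - α)) / W)
        = α * (s ^ 2 * (α + β - 1) / W) := by field_simp; ring
    rw [this]
    have : s ^ 2 * (α + β - 1) / W ≤ 1 := (div_le_one hW).2 h5
    nlinarith
  · have : β * (s ^ 2 * (α * (1 + β - α)) / W) - (1 - α) * (s ^ 2 * (β * (1 + α - β)) / W)
        = β * (s ^ 2 * (α + β - 1) / W) := by field_simp; ring
    rw [this]
    have : s ^ 2 * (α + β - 1) / W ≤ 1 := (div_le_one hW).2 h5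
    nlinarith
  · rw [div_le_iff₀ hW]
    have k : s * (β * (1 + α - β)) ≤ W := by
      have : s * (β * (1 + α - β)) ≤ 2 * (β * (1 + α - β)) :=
        mul_le_mul_of_nonneg_right hs3 (by positivity)
      rw [hWd]
      nlinarith [mul_nonneg (sub_nonneg.2 h2) hS'.le]
    nlinarith
  · rw [div_lt_one hW]
    have : s * (α + β - 1) < s ^ 2 * (α + β - 1) := mul_lt_mul_of_pos_right (by nlinarith) hS'
    linarith
  · field_simp
  · field_simp

lemma hull7 {v1 v2 v3 v4 v5 v6 v7 : E2} {C : Set E2} (hC : Convex ℝ C) (h1 : v1 ∈ C) (h2 : v2 ∈ C)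
    (h3 : v3 ∈ C) (h4 : v4 ∈ C) (h5 : v5 ∈ C) (h6 : v6 ∈ C) (h7 : v7 ∈ C) :
    convexHull ℝ {v1, v2, v3, v4, v5, v6, v7} ⊆ C := by
  refine convexHull_min ?_ hC
  rintro x (rfl | rfl | rfl | rfl | rfl | rfl | rfl) <;> assumption

lemma bd7 {v1 v2 v3 v4 v5 v6 v7 a : E2} {c : ℝ} (h1 : (inner ℝ a v1 : ℝ) ≤ c)
    (h2 : (inner ℝ a v2 : ℝ) ≤ c) (h3 : (inner ℝ a v3 : ℝ) ≤ c) (h4 : (inner ℝ a v4 : ℝ) ≤ c)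
    (h5 : (inner ℝ a v5 : ℝ) ≤ c) (h6 : (inner ℝ a v6 : ℝ) ≤ c) (h7 : (inner ℝ a v7 : ℝ) ≤ c) :
    ∀ x ∈ convexHull ℝ {v1, v2, v3, v4, v5, v6, v7}, (inner ℝ a x : ℝ) ≤ c := by
  intro x hx
  have hcv : Convex ℝ {y : E2 | (inner ℝ a y : ℝ) ≤ c} :=
    convex_halfSpace_le (f := fun y : E2 => (inner ℝ a y : ℝ))
      ⟨fun x y => inner_add_right _ _ _, fun r x => by simp [inner_smul_right]⟩ c
  exact hull7 hcv h1 h2 h3 h4 h5 h6 h7 hx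

/-- the seven-point body -/
structure Bar (s α β m2 m3 γ : ℝ) (p p1 p2 p3 e2 e3 : E2) : Prop where
  s1 : 1 < s
  α0 : 0 < α
  αβ : α ≤ β
  β1 : β ≤ 1
  i1 : s ≤ s * α + β
  i2 : s ≤ α + s * β
  S1 : 1 < α + β
  Ss : α + β ≤ s
  m20 : 0 < m2
  m30 : 0 < m3
  ms : m2 + m3 = s ^ 2
  i3 : α * m2 - (1 - β) * m3 ≤ α
  i4 : β * m3 - (1 - α) * m2 ≤ β
  i5 : m2 ≤ s
  γ0 : 0 < γ
  γ1 : γ < 1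
  g2 : m2 * (α + β - 1) = s * γ * (β * (1 + α - β))
  g3 : m3 * (α + β - 1) = s * γ * (α * (1 + β - α))
  hp : p = β • p2 - α • p3
  hp1 : p1 = (-(m2 / s)) • p2 + (-(m3 / s)) • p3
  X2 : (inner ℝ e2 p2 : ℝ) = 1
  X3 : (inner ℝ e2 p3 : ℝ) = 0
  Y2 : (inner ℝ e3 p2 : ℝ) = 0
  Y3 : (inner ℝ e3 p3 : ℝ) = 1
  ex : ∀ x : E2, x = (inner ℝ e2 x : ℝ) • p2 + (inner ℝ e3 x : ℝ) • p3

def bar (s : ℝ) (p p1 p2 p3 : E2) : Set E2 :=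
  convexHull ℝ {p, -p, p2, p3, -s • p1, -s • p2, -s • p3}

section barsec
variable {s α β m2 m3 γ : ℝ} {p p1 p2 p3 e2 e3 : E2}

lemma Bar.q (h : Bar s α β m2 m3 γ p p1 p2 p3 e2 e3) : -s • p1 = m2 • p2 + m3 • p3 := by
  have := h.s1
  have hs : s ≠ 0 := by linarith
  rw [h.hp1, smul_add, smul_smul, smul_smul]
  congr 2 <;> field_simp

lemma Bar.hp' (h : Bar s α β m2 m3 γ p p1 p2 p3 e2 e3) : p = β • p2 + (-α) • p3 := by
  rw [h.hp]; module

lemma Bar.val (h : Bar s α β m2 m3 γ p p1 p2 p3 e2 e3) (A B c : ℝ)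
    (h1 : A * β - B * α ≤ c) (h2 : -(A * β - B * α) ≤ c) (h3 : A ≤ c) (h4 : B ≤ c)
    (h5 : A * m2 + B * m3 ≤ c) (h6 : -s * A ≤ c) (h7 : -s * B ≤ c) :
    ∀ x ∈ bar s p p1 p2 p3, (inner ℝ (A • e2 + B • e3) x : ℝ) ≤ c := by
  unfold bar
  rw [h.q]
  have e : p = β • p2 - α • p3 := h.hp
  apply bd7 <;> simp only [e, inner_add_left, real_inner_smul_left, inner_add_right, inner_sub_right,
    inner_smul_right, inner_neg_right, h.X2, h.X3, h.Y2, h.Y3] <;> linarith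

lemma Bar.inn (h : Bar s α β m2 m3 γ p p1 p2 p3 e2 e3) (A B x y : ℝ) :
    (inner ℝ (A • e2 + B • e3) (x • p2 + y • p3) : ℝ) = A * x + B * y := by
  simp only [inner_add_left, real_inner_smul_left, inner_add_right,
    inner_smul_right, h.X2, h.X3, h.Y2, h.Y3]; ring

lemma Bar.ne (h : Bar s α β m2 m3 γ p p1 p2 p3 e2 e3) {A B : ℝ} (hA : A ≠ 0) :
    A • e2 + B • e3 ≠ 0 := by
  intro h0
  have := h.inn A B 1 0
  rw [h0] at this
  simp at this
  exact hA this.symm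

lemma Bar.u1 (h : Bar s α β m2 m3 γ p p1 p2 p3 e2 e3) :
    (inner ℝ ((-1:ℝ) • e2 + (-1:ℝ) • e3) p1 : ℝ) = s ∧
    ∀ x ∈ bar s p p1 p2 p3, (inner ℝ ((-1:ℝ) • e2 + (-1:ℝ) • e3) x : ℝ) ≤ s := by
  obtain ⟨s1, α0, αβ, β1, i1, i2, S1, Ss, m20, m30, ms, i3, i4, i5, γ0, γ1, g2, g3, -⟩ := id h
  constructor
  · rw [h.hp1, h.inn]; field_simp; linarith
  · apply h.val <;> nlinarith

lemma Bar.u2 (h : Bar s α β m2 m3 γ p p1 p2 p3 e2 e3) :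
    (inner ℝ (α • e2 + (-(1 - β)) • e3) p2 : ℝ) = α ∧
    (inner ℝ (α • e2 + (-(1 - β)) • e3) p : ℝ) = α ∧
    ∀ x ∈ bar s p p1 p2 p3, (inner ℝ (α • e2 + (-(1 - β)) • e3) x : ℝ) ≤ α := by
  obtain ⟨s1, α0, αβ, β1, i1, i2, S1, Ss, m20, m30, ms, i3, i4, i5, γ0, γ1, g2, g3, -⟩ := id h
  refine ⟨?_, ?_, ?_⟩
  · have := h.inn α (-(1 - β)) 1 0
    simpa using this
  · have := h.inn α (-(1 - β)) β (-α)
    rw [h.hp', this]; ring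
  · apply h.val <;> nlinarith

lemma Bar.u3 (h : Bar s α β m2 m3 γ p p1 p2 p3 e2 e3) :
    (inner ℝ ((-(1 - α)) • e2 + β • e3) p3 : ℝ) = β ∧
    (inner ℝ ((-(1 - α)) • e2 + β • e3) p : ℝ) = -β ∧
    ∀ x ∈ bar s p p1 p2 p3, (inner ℝ ((-(1 - α)) • e2 + β • e3) x : ℝ) ≤ β := by
  obtain ⟨s1, α0, αβ, β1, i1, i2, S1, Ss, m20, m30, ms, i3, i4, i5, γ0, γ1, g2, g3, -⟩ := id h
  refine ⟨?_, ?_, ?_⟩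
  · have := h.inn (-(1 - α)) β 0 1
    simpa using this
  · have := h.inn (-(1 - α)) β β (-α)
    rw [h.hp', this]; ring
  · apply h.val <;> nlinarith

lemma Bar.hh (h : Bar s α β m2 m3 γ p p1 p2 p3 e2 e3) :
    (inner ℝ ((s - α) • e2 + (-β) • e3) p : ℝ) = s * β ∧
    (∀ x ∈ bar s p p1 p2 p3, (inner ℝ ((s - α) • e2 + (-β) • e3) x : ℝ) ≤ s * β) ∧
    (∀ x ∈ bar s p p1 p2 p3, -(s * (s - α)) ≤ (inner ℝ ((s - α) • e2 + (-β) • e3) x : ℝ)) := by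
  obtain ⟨s1, α0, αβ, β1, i1, i2, S1, Ss, m20, m30, ms, i3, i4, i5, γ0, γ1, g2, g3, -⟩ := id h
  have hm : m3 = s ^ 2 - m2 := by linarith
  have hsa : 0 < s - α := by linarith
  refine ⟨?_, ?_, ?_⟩
  · have := h.inn (s - α) (-β) β (-α)
    rw [h.hp', this]; ring
  · apply h.val
    · nlinarith
    · nlinarith
    · nlinarith
    · nlinarith
    · rw [hm]; nlinarith
    · nlinarith
    · nlinarith
  · intro x hx
    have := h.val (-(s - α)) β (s * (s - α)) (by nlinarith) (by nlinarith) (by nlinarith)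
      (by nlinarith) (by nlinarith) (by nlinarith) (by nlinarith) x hx
    have e : (-(s - α)) • e2 + β • e3 = -((s - α) • e2 + (-β) • e3) := by module
    rw [e, inner_neg_left] at this
    linarith
lemma Bar.cv : Convex ℝ (bar s p p1 p2 p3) := convex_convexHull ℝ _

lemma Bar.vs : p ∈ bar s p p1 p2 p3 ∧ -p ∈ bar s p p1 p2 p3 ∧ p2 ∈ bar s p p1 p2 p3 ∧
    p3 ∈ bar s p p1 p2 p3 ∧ (-s) • p1 ∈ bar s p p1 p2 p3 ∧ (-s) • p2 ∈ bar s p p1 p2 p3 ∧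
    (-s) • p3 ∈ bar s p p1 p2 p3 := by
  have h := subset_convexHull ℝ ({p, -p, p2, p3, -s • p1, -s • p2, -s • p3} : Set E2)
  refine ⟨h (Or.inl rfl), h (Or.inr (Or.inl rfl)), h (Or.inr (Or.inr (Or.inl rfl))),
    h (Or.inr (Or.inr (Or.inr (Or.inl rfl)))),
    h (Or.inr (Or.inr (Or.inr (Or.inr (Or.inl rfl))))),
    h (Or.inr (Or.inr (Or.inr (Or.inr (Or.inr (Or.inl rfl)))))),
    h (Or.inr (Or.inr (Or.inr (Or.inr (Or.inr (Or.inr rfl))))))⟩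

lemma Bar.zero : (0:E2) ∈ bar s p p1 p2 p3 := by
  obtain ⟨v1, v2, -⟩ := Bar.vs (s := s) (p := p) (p1 := p1) (p2 := p2) (p3 := p3)
  have := Bar.cv v1 v2 (a := 1 / 2) (b := 1 / 2) (by norm_num) (by norm_num) (by norm_num)
  convert this using 1
  module

lemma Bar.p1_mem (h : Bar s α β m2 m3 γ p p1 p2 p3 e2 e3) : p1 ∈ bar s p p1 p2 p3 := by
  obtain ⟨v1, v2, v3, v4, v5, v6, v7⟩ := Bar.vs (s := s) (p := p) (p1 := p1) (p2 := p2) (p3 := p3)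
  have hs : 0 < s := by linarith [h.s1]
  have m20 := h.m20
  have m30 := h.m30
  have := Bar.cv v6 v7 (a := m2 / s ^ 2) (b := m3 / s ^ 2) (by positivity) (by positivity)
    (by have := h.ms; field_simp; linarith)
  convert this using 1
  rw [h.hp1, smul_smul, smul_smul]
  congr 2 <;> field_simp

lemma Bar.sc {x : E2} (hx : x ∈ bar s p p1 p2 p3) {t : ℝ} (h0 : 0 ≤ t) (h1 : t ≤ 1) :
    t • x ∈ bar s p p1 p2 p3 := by
  have := Bar.cv hx Bar.zero (a := t) (b := 1 - t) h0 (by linarith) (by linarith)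
  simpa using this

lemma Bar.cen (h : Bar s α β m2 m3 γ p p1 p2 p3 e2 e3) :
    bar s p p1 p2 p3 ⊆ s • (-bar s p p1 p2 p3) := by
  obtain ⟨v1, v2, v3, v4, v5, v6, v7⟩ := Bar.vs (s := s) (p := p) (p1 := p1) (p2 := p2) (p3 := p3)
  have s1 := h.s1
  have hs : 0 < s := by linarith
  have i0 : 0 ≤ s⁻¹ := by positivity
  have i1 : s⁻¹ ≤ 1 := inv_le_one_of_one_le₀ s1.le
  have i2 : s⁻¹ * s⁻¹ ≤ 1 := by nlinarith
  have key : ∀ x y : E2, y ∈ bar s p p1 p2 p3 → y = (-s⁻¹) • x → x ∈ s • (-bar s p p1 p2 p3) := by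
    intro x y hy e
    refine ⟨-y, by simpa using hy, ?_⟩
    simp only [e, ← smul_neg, neg_smul, neg_neg]
    rw [smul_smul, mul_inv_cancel₀ hs.ne', one_smul]
  refine hull7 (Bar.cv.neg.smul s) ?_ ?_ ?_ ?_ ?_ ?_ ?_
  · exact key _ _ (Bar.sc v2 i0 i1) (by module)
  · exact key _ _ (Bar.sc v1 i0 i1) (by module)
  · exact key _ _ (Bar.sc v6 (mul_nonneg i0 i0) i2) (by rw [smul_smul]; congr 1; field_simp)
  · exact key _ _ (Bar.sc v7 (mul_nonneg i0 i0) i2) (by rw [smul_smul]; congr 1; field_simp)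
  · exact key _ _ h.p1_mem (by rw [smul_smul]; simp [hs.ne'])
  · exact key _ _ v3 (by rw [smul_smul]; simp [hs.ne'])
  · exact key _ _ v4 (by rw [smul_smul]; simp [hs.ne'])

lemma Bar.dep : (α + β - 1) • ((-1:ℝ) • e2 + (-1:ℝ) • e3) +
    (1 + β - α) • (α • e2 + (-(1 - β)) • e3) + (1 + α - β) • ((-(1 - α)) • e2 + β • e3) = 0 := by
  module

lemma Bar.asym (h : Bar s α β m2 m3 γ p p1 p2 p3 e2 e3) : minkAsym (bar s p p1 p2 p3) = s := by
  obtain ⟨v1, v2, v3, v4, v5, v6, v7⟩ := Bar.vs (s := s) (p := p) (p1 := p1) (p2 := p2) (p3 := p3)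
  obtain ⟨s1, α0, αβ, β1, i1, i2, S1, -⟩ := id h
  obtain ⟨x1, y1⟩ := h.u1
  obtain ⟨x2, -, y2⟩ := h.u2
  obtain ⟨x3, -, y3⟩ := h.u3
  exact asym_eq (by linarith) h.cen v5 v6 v7 (by rwa [x1]) (by rwa [x2]) (by rwa [x3])
    (by rw [x1]; linarith) (by rw [x2]; linarith) (by rw [x3]; linarith)
    (l1 := α + β - 1) (l2 := 1 + β - α) (l3 := 1 + α - β) (by linarith) (by linarith)
    (by linarith) Bar.dep

lemma Bar.int (h : Bar s α β m2 m3 γ p p1 p2 p3 e2 e3) :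
    (0:E2) ∈ interior (convexHull ℝ {p1, p2, p3}) := by
  obtain ⟨s1, α0, αβ, β1, i1, i2, S1, Ss, m20, m30, ms, -⟩ := id h
  rw [mem_interior]
  set T : E2 → ℝ := fun x => (1 - inner ℝ e2 x - inner ℝ e3 x) / (1 + s) with hT
  have hTc : Continuous T := by fun_prop
  refine ⟨{x | 0 < T x} ∩ ({x | 0 < inner ℝ e2 x + T x * (m2 / s)} ∩
    {x | 0 < inner ℝ e3 x + T x * (m3 / s)}), ?_, ?_, ?_⟩
  · rintro x ⟨h1, h2, h3⟩
    simp only [mem_ofPred_eq] at h1 h2 h3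
    have := hull3_mem (convex_convexHull ℝ {p1, p2, p3})
      (subset_convexHull ℝ {p1, p2, p3} (by simp : p1 ∈ ({p1, p2, p3} : Set E2)))
      (subset_convexHull ℝ {p1, p2, p3} (by simp : p2 ∈ ({p1, p2, p3} : Set E2)))
      (subset_convexHull ℝ {p1, p2, p3} (by simp : p3 ∈ ({p1, p2, p3} : Set E2)))
      h1.le h2.le h3.le (by
        have e : m2 / s + m3 / s = s := by field_simp; linarith
        have e2 : T x * (1 + s) = 1 - inner ℝ e2 x - inner ℝ e3 x := by
          simp only [hT]; field_simp
        linear_combination T x * e + e2)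
    convert this using 1
    conv_lhs => rw [h.ex x]
    rw [h.hp1]
    module
  · exact (isOpen_lt continuous_const hTc).inter ((isOpen_lt continuous_const (by fun_prop)).inter
      (isOpen_lt continuous_const (by fun_prop)))
  · simp only [hT, mem_inter_iff, mem_ofPred_eq, inner_zero_right]
    refine ⟨?_, ?_, ?_⟩ <;> · ring_nf; positivity

lemma Bar.body (h : Bar s α β m2 m3 γ p p1 p2 p3 e2 e3) : IsConvexBody (bar s p p1 p2 p3) := by
  obtain ⟨v1, v2, v3, v4, v5, v6, v7⟩ := Bar.vs (s := s) (p := p) (p1 := p1) (p2 := p2) (p3 := p3)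
  refine ⟨Bar.cv, compact_hull (Set.toFinite _).isCompact, 0, ?_⟩
  refine interior_mono (convexHull_min ?_ Bar.cv) h.int
  rintro x (rfl | rfl | rfl)
  · exact h.p1_mem
  · exact v3
  · exact v4

lemma Bar.ap (h : Bar s α β m2 m3 γ p p1 p2 p3 e2 e3) {a q : E2} (ha : a ≠ 0)
    (hq : q ∈ bar s p p1 p2 p3) (hn : (-s) • q ∈ bar s p p1 p2 p3)
    (hu : ∀ x ∈ bar s p p1 p2 p3, (inner ℝ a x : ℝ) ≤ inner ℝ a q) :
    IsAsymPoint (bar s p p1 p2 p3) q := by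
  have hs : 0 < s := by linarith [h.s1]
  refine ⟨frontier_of_max ha hq hu, ?_⟩
  rw [h.asym]
  refine frontier_of_max ha ⟨_, hn, ?_⟩ ?_
  · simp only [smul_smul]; simp [hs.ne']
  · rintro _ ⟨y, hy, rfl⟩
    exact hu _ (centered_iff hs h.cen hy)

lemma Bar.ws (h : Bar s α β m2 m3 γ p p1 p2 p3 e2 e3) : WellSpread (bar s p p1 p2 p3) p1 p2 p3 := by
  obtain ⟨v1, v2, v3, v4, v5, v6, v7⟩ := Bar.vs (s := s) (p := p) (p1 := p1) (p2 := p2) (p3 := p3)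
  obtain ⟨s1, α0, αβ, β1, i1, i2, S1, -⟩ := id h
  obtain ⟨x1, y1⟩ := h.u1
  obtain ⟨x2, -, y2⟩ := h.u2
  obtain ⟨x3, -, y3⟩ := h.u3
  have n1 : (-1:ℝ) • e2 + (-1:ℝ) • e3 ≠ 0 := h.ne (by norm_num)
  have n2 : α • e2 + (-(1 - β)) • e3 ≠ 0 := h.ne α0.ne'
  have n3 : (-(1 - α)) • e2 + β • e3 ≠ 0 := by
    intro h0
    rw [h0, inner_zero_left] at x3
    linarith
  have u1 := h.ap n1 h.p1_mem v5 (by rwa [x1])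
  have u2 := h.ap n2 v3 v6 (by rwa [x2])
  have u3 := h.ap n3 v4 v7 (by rwa [x3])
  refine ⟨u1, u2, u3, _, _, _, n1, n2, n3, by rwa [x1], by rwa [x2], by rwa [x3], h.int, ?_⟩
  have hS : 0 < 1 + α + β := by linarith
  have := hull3_mem (convex_convexHull ℝ {(-1:ℝ) • e2 + (-1:ℝ) • e3, α • e2 + (-(1 - β)) • e3,
      (-(1 - α)) • e2 + β • e3})
    (subset_convexHull ℝ _ (mem_insert _ _))
    (subset_convexHull ℝ _ (mem_insert_of_mem _ (mem_insert _ _)))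
    (subset_convexHull ℝ _ (mem_insert_of_mem _ (mem_insert_of_mem _ (mem_singleton _))))
    (u := (1 + α + β)⁻¹ * (α + β - 1)) (v := (1 + α + β)⁻¹ * (1 + β - α))
    (w := (1 + α + β)⁻¹ * (1 + α - β))
    (mul_nonneg (by positivity) (by linarith)) (mul_nonneg (by positivity) (by linarith))
    (mul_nonneg (by positivity) (by linarith)) (by field_simp; ring)
  convert this using 1
  module

lemma mem_line7 {a b x : E2} : x ∈ (affineSpan ℝ {a, b} : Set E2) ↔
    ∃ r : ℝ, AffineMap.lineMap a b r = x := by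
  constructor
  · intro hx
    have h : (x - a) +ᵥ a ∈ affineSpan ℝ {a, b} := by simpa using hx
    obtain ⟨r, hr⟩ := vadd_left_mem_affineSpan_pair.1 h
    refine ⟨r, ?_⟩
    rw [AffineMap.lineMap_apply, hr]; simp
  · rintro ⟨r, rfl⟩
    exact AffineMap.lineMap_mem_affineSpan_pair r a b

lemma Bar.d (h : Bar s α β m2 m3 γ p p1 p2 p3 e2 e3) : ∃ d1 : E2,
    (affineSpan ℝ {-p, p3} : Set E2) ∩ (affineSpan ℝ {p, p2} : Set E2) = {d1} ∧
         ∃ γ : ℝ, 0 < γ ∧ γ < 1 ∧ p1 = -(γ • d1) := by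
  obtain ⟨s1, α0, αβ, β1, i1, i2, S1, Ss, m20, m30, ms, i3, i4, i5, γ0, γ1, g2, g3, -⟩ := id h
  have hS : α + β - 1 ≠ 0 := by linarith
  have hs : s ≠ 0 := by linarith
  obtain ⟨x2, x2', -⟩ := h.u2
  obtain ⟨x3, x3', -⟩ := h.u3
  refine ⟨(β * (1 + α - β) / (α + β - 1)) • p2 + (α * (1 + β - α) / (α + β - 1)) • p3, ?_,
    γ, γ0, γ1, ?_⟩
  · apply Set.Subset.antisymm
    · rintro x ⟨hx, hy⟩
      obtain ⟨r, hr⟩ := mem_line7.1 hx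
      obtain ⟨t, ht⟩ := mem_line7.1 hy
      have k3 : (inner ℝ ((-(1 - α)) • e2 + β • e3) x : ℝ) = β := by
        rw [← hr, AffineMap.lineMap_apply_module, inner_add_right, inner_smul_right,
          inner_smul_right, inner_neg_right, x3, x3']; ring
      have k2 : (inner ℝ (α • e2 + (-(1 - β)) • e3) x : ℝ) = α := by
        rw [← ht, AffineMap.lineMap_apply_module, inner_add_right, inner_smul_right,
          inner_smul_right, x2, x2']; ring
      simp only [inner_add_left, real_inner_smul_left] at k2 k3
      rw [mem_singleton_iff]
      conv_lhs => rw [h.ex x]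
      congr 2
      · rw [eq_div_iff hS]; linear_combination β * k2 + (1 - β) * k3
      · rw [eq_div_iff hS]; linear_combination (1 - α) * k2 + α * k3
    · rintro x rfl
      constructor
      · refine mem_line7.2 ⟨2 * α / (α + β - 1), ?_⟩
        rw [AffineMap.lineMap_apply_module, h.hp]
        match_scalars <;> (field_simp; ring)
      · refine mem_line7.2 ⟨2 + 2 * (1 - α) / (α + β - 1), ?_⟩
        rw [AffineMap.lineMap_apply_module, h.hp]
        match_scalars <;> (field_simp; ring)
  · rw [h.hp1]
    have e2 : m2 / s = γ * (β * (1 + α - β) / (α + β - 1)) := by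
      field_simp; linarith
    have e3 : m3 / s = γ * (α * (1 + β - α) / (α + β - 1)) := by
      field_simp; linarith
    rw [e2, e3]; module

lemma Bar.tau (h : Bar s α β m2 m3 γ p p1 p2 p3 e2 e3) (hs2 : s + 1 < s ^ 2)
    (hM : ∀ α' β', R1 s α' β' → 2 * β' / (s + β' - α') ≤ 2 * β / (s + β - α)) :
    tauB (bar s p p1 p2 p3) = 2 * β / (s + β - α) ∧
    p ∈ (2 * β / (s + β - α)) • frontier ((2:ℝ)⁻¹ • (bar s p p1 p2 p3 - bar s p p1 p2 p3)) := by
  obtain ⟨v1, v2, -⟩ := Bar.vs (s := s) (p := p) (p1 := p1) (p2 := p2) (p3 := p3)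
  obtain ⟨s1, α0, αβ, β1, i1, i2, S1, Ss, -⟩ := id h
  have hD : 0 < s + β - α := by linarith
  have hβ : 0 < β := by linarith
  have hM0 : 0 < 2 * β / (s + β - α) := by positivity
  have hmem := tau_mem h.body (by unfold MinkCentered; rw [h.asym]; exact h.cen)
    (by rw [h.asym]; exact s1) (by rw [h.asym]; exact hs2) hM0 (by rw [h.asym]; exact hM)
  obtain ⟨w1, w2, w3⟩ := h.hh
  have hpp : p ∈ bar s p p1 p2 p3 ∩ (-bar s p p1 p2 p3) := ⟨v1, by simpa using v2⟩
  set C := bar s p p1 p2 p3 with hC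
  set g := (s - α) • e2 + (-β) • e3 with hg
  have hg0 : g ≠ 0 := h.ne (by linarith)
  have up : ∀ x ∈ (2:ℝ)⁻¹ • (C - C), (inner ℝ g x : ℝ) ≤ s * (s + β - α) / 2 := by
    rintro _ ⟨_, ⟨x, hx, y, hy, rfl⟩, rfl⟩
    have a1 := w2 x hx
    have a2 := w3 y hy
    simp only [inner_smul_right, inner_sub_right]
    linarith
  constructor
  · apply le_antisymm
    · exact csInf_le (tau_bdd C) hmem
    · refine le_csInf ⟨_, hmem⟩ ?_
      rintro ρ ⟨hρ, hsub⟩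
      obtain ⟨x, hx, e⟩ := hsub hpp
      have a1 := up x hx
      have a2 : s * β = ρ * inner ℝ g x := by
        rw [← w1, ← inner_smul_right]; exact congrArg _ e.symm
      rw [div_le_iff₀ hD]
      have a3 := mul_le_mul_of_nonneg_left a1 hρ.le
      have : s * (2 * β) ≤ s * (ρ * (s + β - α)) := by linarith
      exact le_of_mul_le_mul_left this (by linarith)
  · obtain ⟨x, hx, e⟩ := hmem.2 hpp
    refine ⟨x, frontier_of_max hg0 hx ?_, e⟩
    have a2 : s * β = (2 * β / (s + β - α)) * inner ℝ g x := by
      rw [← w1, ← inner_smul_right]; exact congrArg _ e.symm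
    have a3 : (inner ℝ g x : ℝ) = s * (s + β - α) / 2 := by
      field_simp at a2
      linarith
    rw [a3]
    exact up

end barsec

theorem stmt10 (K : Set E2) (hK : IsConvexBody K) (hc : MinkCentered K)
    (hs : phiR < minkAsym K) :
    ∃ p p1 p2 p3 : E2, p ∈ frontier K ∩ frontier (-K) ∧
      (let s := minkAsym K
       let Kbar := convexHull ℝ {p, -p, p2, p3, -s • p1, -s • p2, -s • p3}
       MinkCentered Kbar ∧
       WellSpread Kbar p1 p2 p3 ∧
       (∃ d1 : E2,
         (affineSpan ℝ {-p, p3} : Set E2) ∩ (affineSpan ℝ {p, p2} : Set E2) = {d1} ∧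
         ∃ γ : ℝ, 0 < γ ∧ γ < 1 ∧ p1 = -(γ • d1)) ∧
       minkAsym Kbar = minkAsym K ∧
       tauB Kbar ≥ tauB K ∧
       p ∈ frontier (Kbar ∩ (-Kbar)) ∧
       p ∈ tauB Kbar • frontier ((2:ℝ)⁻¹ • (Kbar - Kbar))) := by
  have h5 : Real.sqrt 5 ^ 2 = 5 := Real.sq_sqrt (by norm_num)
  have h50 := Real.sqrt_nonneg 5
  have h52 : 2 < Real.sqrt 5 := by nlinarith
  have hs1 : 1 < minkAsym K := by unfold phiR at hs; linarith
  have hs2 : minkAsym K + 1 < minkAsym K ^ 2 := by unfold phiR at hs; nlinarith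
  obtain ⟨_, _, _, _, _, _, _, _, _, hcfg⟩ := exists_cfg hK hc (by linarith)
  have hs3 := hcfg.sle
  obtain ⟨p, hp0, hpf⟩ := exists_common hK (zero_int hK (by linarith) hc)
  obtain ⟨α, β, hR, hM⟩ := R1_max hs1 hs2 hs3
  obtain ⟨α0, β0, S1, Ss, i2, m2, m3, γ, m20, m30, ms, i3, i4, i5, γ0, γ1, g2, g3⟩ :=
    nums hs1 hs2 hs3 hR
  obtain ⟨p2, p3, e2, e3, hp, X2, X3, Y2, Y3, ex⟩ := dual_basis hp0 β α0.ne'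
  obtain ⟨r1, r2, r3, r4, r5⟩ := id hR
  have hD : 0 < minkAsym K + β - α := by linarith
  have hM0 : 0 < 2 * β / (minkAsym K + β - α) := by positivity
  have hK' := tau_mem hK hc hs1 hs2 hM0 hM
  have hτ : tauB K ≤ 2 * β / (minkAsym K + β - α) := csInf_le (tau_bdd K) hK'
  generalize minkAsym K = s at *
  have h : Bar s α β m2 m3 γ p ((-(m2 / s)) • p2 + (-(m3 / s)) • p3) p2 p3 e2 e3 :=
    ⟨hs1, α0, r2, r3, r4, i2, S1, Ss, m20, m30, ms, i3, i4, i5, γ0, γ1, g2, g3, hp, rfl,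
      X2, X3, Y2, Y3, ex⟩
  refine ⟨p, (-(m2 / s)) • p2 + (-(m3 / s)) • p3, p2, p3, hpf, ?_⟩
  intro s' Kbar
  obtain ⟨t1, t2⟩ := h.tau hs2 hM
  obtain ⟨v1, v2, -⟩ := Bar.vs (s := s) (p := p) (p1 := (-(m2 / s)) • p2 + (-(m3 / s)) • p3)
    (p2 := p2) (p3 := p3)
  refine ⟨?_, h.ws, h.d, h.asym, ?_, ?_, ?_⟩
  · change bar s p _ p2 p3 ⊆ minkAsym (bar s p _ p2 p3) • _
    rw [h.asym]
    exact h.cen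
  · exact t1 ▸ hτ
  · obtain ⟨x2, x2', y2⟩ := h.u2
    exact frontier_of_max (h.ne α0.ne') ⟨v1, v2⟩ (fun y hy => by
      rw [x2']; exact y2 y hy.1)
  · change p ∈ tauB (bar s p _ p2 p3) • _
    rw [t1]
    exact t2
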